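/- Let k be a field and C a Krull–Schmidt, Hom-finite, k-linear triangulated category with a cluster tilting object T. Let X ∈ add T be an indecomposable object. Then X admits two almost split triangles X → Y' → Z' → X[1] and X[−1] → Z'' → Y'' → X, in which Z' and Z'' have no nonzero direct summands belonging to add T. -/

import Mathlib

open CategoryTheory CategoryTheory.Limits CategoryTheory.Pretriangulated

universe v u

variable (k : Type*) [Field k]
variable (C : Type u) [Category.{v} C] [Preadditive C] [HasZeroObject C] [HasShift C ℤ]
  [∀ n : ℤ, (shiftFunctor C n).Additive] [Pretriangulated C]
  [HasFiniteBiproducts C] [Linear k C]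

/-- `C` is Krull–Schmidt: every object is isomorphic to a finite direct sum of objects
with local endomorphism rings. -/
def KrullSchmidt : Prop :=
  ∀ X : C, ∃ (n : ℕ) (f : Fin n → C) (_ : X ≅ ⨁ f), ∀ i, IsLocalRing (End (f i))

/-- `add T`: the objects isomorphic to direct summands of finite direct sums of copies
of `T`, described as retracts of finite powers `T^n`. -/
def addSet (T : C) : Set C :=
  {X | ∃ (n : ℕ) (i : X ⟶ ⨁ (fun _ : Fin n => T)) (p : ⨁ (fun _ : Fin n => T) ⟶ X),
    i ≫ p = 𝟙 X}

/-- `T` is a cluster tilting object: for every `X`, membership in `add T` is equivalent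
to the vanishing of `Hom(T, X[1])` and to the vanishing of `Hom(X, T[1])`. -/
def ClusterTilting (T : C) : Prop :=
  ∀ X : C, (X ∈ addSet C T ↔ ∀ f : T ⟶ X⟦(1 : ℤ)⟧, f = 0) ∧
           (X ∈ addSet C T ↔ ∀ f : X ⟶ T⟦(1 : ℤ)⟧, f = 0)

/-- An object is indecomposable if it is nonzero and in any biproduct decomposition one
summand vanishes. -/
def Indecomposable (X : C) : Prop :=
  ¬ IsZero X ∧ ∀ (Y Z : C), (X ≅ Y ⊞ Z) → IsZero Y ∨ IsZero Z

/-- `x : A ⟶ B` is left almost split: any morphism out of `A` which is not a section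
factors through `x`. -/
def LeftAlmostSplit {A B : C} (x : A ⟶ B) : Prop :=
  ∀ ⦃M : C⦄ (a : A ⟶ M), (¬ ∃ r : M ⟶ A, a ≫ r = 𝟙 A) → ∃ m : B ⟶ M, x ≫ m = a

/-- `y : B ⟶ X` is right almost split: any morphism into `X` which is not a retraction
factors through `y`. -/
def RightAlmostSplit {B X : C} (y : B ⟶ X) : Prop :=
  ∀ ⦃N : C⦄ (c : N ⟶ X), (¬ ∃ s : X ⟶ N, s ≫ c = 𝟙 X) → ∃ n : N ⟶ B, n ≫ y = c

/-- An almost split (Auslander–Reiten) triangle: a nonsplit distinguished triangle whose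
first morphism is left almost split and whose second morphism is right almost split. -/
def IsAlmostSplitTriangle {A B X : C} (x : A ⟶ B) (y : B ⟶ X)
    (δ : X ⟶ A⟦(1 : ℤ)⟧) : Prop :=
  (Triangle.mk x y δ ∈ distTriang C) ∧ δ ≠ 0 ∧
    LeftAlmostSplit C x ∧ RightAlmostSplit C y


section Helpers

set_option linter.unusedSectionVars false

theorem tri_yon2 {X Y Z W : C} {f : X ⟶ Y} {g : Y ⟶ Z} {h : Z ⟶ X⟦(1 : ℤ)⟧}
    (hT : Triangle.mk f g h ∈ distTriang C) (a : Y ⟶ W) (ha : f ≫ a = 0) :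
    ∃ b : Z ⟶ W, a = g ≫ b := Triangle.yoneda_exact₂ _ hT a ha

theorem tri_yon3 {X Y Z W : C} {f : X ⟶ Y} {g : Y ⟶ Z} {h : Z ⟶ X⟦(1 : ℤ)⟧}
    (hT : Triangle.mk f g h ∈ distTriang C) (a : Z ⟶ W) (ha : g ≫ a = 0) :
    ∃ b : X⟦(1 : ℤ)⟧ ⟶ W, a = h ≫ b := Triangle.yoneda_exact₃ _ hT a ha

theorem tri_yon1 {X Y Z W : C} {f : X ⟶ Y} {g : Y ⟶ Z} {h : Z ⟶ X⟦(1 : ℤ)⟧}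
    (hT : Triangle.mk f g h ∈ distTriang C) (a : X ⟶ W) (ha : h ≫ a⟦(1 : ℤ)⟧' = 0) :
    ∃ b : Y ⟶ W, f ≫ b = a := by
  obtain ⟨b, hb, -⟩ := complete_distinguished_triangle_morphism₂ _ _ hT
    (contractible_distinguished W) a 0 (ha.trans zero_comp.symm)
  exact ⟨b, hb.trans (Category.comp_id a)⟩

theorem tri_coyon2 {X Y Z W : C} {f : X ⟶ Y} {g : Y ⟶ Z} {h : Z ⟶ X⟦(1 : ℤ)⟧}
    (hT : Triangle.mk f g h ∈ distTriang C) (a : W ⟶ Y) (ha : a ≫ g = 0) :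
    ∃ b : W ⟶ X, a = b ≫ f := Triangle.coyoneda_exact₂ _ hT a ha

theorem tri_mor {X Y Z X' Y' : C} {f : X ⟶ Y} {g : Y ⟶ Z} {h : Z ⟶ X⟦(1 : ℤ)⟧}
    (hT : Triangle.mk f g h ∈ distTriang C)
    {f' : X' ⟶ Y'} {g' : Y' ⟶ Z} {h' : Z ⟶ X'⟦(1 : ℤ)⟧}
    (hT' : Triangle.mk f' g' h' ∈ distTriang C) (w : Y' ⟶ Y) (hw : w ≫ g = g') :
    ∃ b : X' ⟶ X, h' ≫ b⟦(1 : ℤ)⟧' = h := by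
  obtain ⟨b, -, hb⟩ := complete_distinguished_triangle_morphism₁ _ _ hT' hT w (𝟙 Z)
    ((Category.comp_id g').trans hw.symm)
  exact ⟨b, hb.trans (Category.id_comp h)⟩


/-- Elementwise local endomorphism ring condition. -/
def LocEnd (X : C) : Prop :=
  ¬ IsZero X ∧ ∀ a b : X ⟶ X, a + b = 𝟙 X → IsIso a ∨ IsIso b


theorem LocEnd_of_isLocalRing {X : C} (h : IsLocalRing (End X)) : LocEnd C X := by
  refine ⟨fun h0 => ?_, fun a b hab => ?_⟩
  · exact one_ne_zero (α := End X) (h0.eq_of_src _ _)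
  · have := h.isUnit_or_isUnit_of_add_one (a := (a : End X)) (b := (b : End X)) hab
    exact this.imp (fun h => (isUnit_iff_isIso _).1 h) (fun h => (isUnit_iff_isIso _).1 h)

theorem LocEnd_of_iso {X Y : C} (e : X ≅ Y) (h : LocEnd C X) : LocEnd C Y := by
  refine ⟨fun h0 => h.1 (h0.of_iso e), fun a b hab => ?_⟩
  have key : ∀ a : Y ⟶ Y, IsIso (e.hom ≫ a ≫ e.inv) → IsIso a := by
    intro a ha
    have : a = e.inv ≫ (e.hom ≫ a ≫ e.inv) ≫ e.hom := by simp
    rw [this]; infer_instance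
  refine (h.2 (e.hom ≫ a ≫ e.inv) (e.hom ≫ b ≫ e.inv) ?_).imp (key a) (key b)
  rw [← Preadditive.comp_add, ← Preadditive.add_comp, hab]; simp

theorem LocEnd_shift {X : C} (n : ℤ) (h : LocEnd C X) : LocEnd C (X⟦n⟧) := by
  refine ⟨fun h0 => h.1 ?_, fun a b hab => ?_⟩
  · rw [IsZero.iff_id_eq_zero] at h0 ⊢
    apply (shiftFunctor C n).map_injective
    rw [CategoryTheory.Functor.map_id, h0, Functor.map_zero]
  · have key : ∀ a : X⟦n⟧ ⟶ X⟦n⟧, IsIso ((shiftFunctor C n).preimage a) → IsIso a := by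
      intro a ha
      rw [← (shiftFunctor C n).map_preimage a]; infer_instance
    refine (h.2 ((shiftFunctor C n).preimage a) ((shiftFunctor C n).preimage b) ?_).imp
      (key a) (key b)
    apply (shiftFunctor C n).map_injective
    rw [Functor.map_add]; simp [hab]

theorem LocEnd_of_indec (hKS : KrullSchmidt C) {X : C} (hind : Indecomposable C X) :
    LocEnd C X := by
  obtain ⟨n, f, e, hf⟩ := hKS X
  have hn : ∃ i : Fin n, True := by
    by_contra hcon
    push Not at hcon
    apply hind.1
    rw [IsZero.iff_id_eq_zero, ← e.hom_inv_id]
    have : e.hom = 0 := by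
      apply biproduct.hom_ext
      intro j; exact (hcon j).elim
    rw [this, zero_comp]
  obtain ⟨i, -⟩ := hn
  have hloc := LocEnd_of_isLocalRing C (hf i)
  let ι : f i ⟶ X := biproduct.ι f i ≫ e.inv
  let π : X ⟶ f i := e.hom ≫ biproduct.π f i
  have hιπ : ι ≫ π = 𝟙 _ := by simp [ι, π]
  obtain ⟨Z, g, h, hT⟩ := distinguished_cocone_triangle ι
  have : Mono ι := by
    have : Mono (ι ≫ π) := by rw [hιπ]; infer_instance
    exact mono_of_mono ι π
  have h0 : h = 0 := Triangle.mor₃_eq_zero_of_mono₁ _ hT this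
  obtain ⟨e', -, -⟩ := exists_iso_binaryBiproduct_of_distTriang _ hT h0
  rcases hind.2 _ _ e' with h1 | h1
  · exact (hloc.1 h1).elim
  · have : IsIso ι := (Triangle.isZero₃_iff_isIso₁ _ hT).1 h1
    exact LocEnd_of_iso C (asIso ι) hloc

theorem LocEnd_fix {Z W : C} (hZ : LocEnd C Z) (δ : Z ⟶ W) (hδ : δ ≠ 0) (r : Z ⟶ Z)
    (hr : r ≫ δ = δ) : IsIso r := by
  rcases hZ.2 r (𝟙 Z - r) (by simp) with h | h
  · exact h
  · exfalso
    apply hδ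
    rw [← cancel_epi (𝟙 Z - r)]
    simp [hr]

theorem LocEnd_fix' {Z W : C} (hZ : LocEnd C Z) (δ : W ⟶ Z) (hδ : δ ≠ 0) (r : Z ⟶ Z)
    (hr : δ ≫ r = δ) : IsIso r := by
  rcases hZ.2 r (𝟙 Z - r) (by simp) with h | h
  · exact h
  · exfalso
    apply hδ
    rw [← cancel_mono (𝟙 Z - r)]
    simp [hr]

theorem exists_ARtriangle {A Z : C} (hA : LocEnd C A) (hZ : LocEnd C Z)
    (δ : Z ⟶ A⟦(1 : ℤ)⟧) (hδ : δ ≠ 0)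
    (H : ∀ (N : C) (f : N ⟶ A⟦(1 : ℤ)⟧), f ≠ 0 → ∃ g : Z ⟶ N, g ≫ f = δ) :
    ∃ (Y : C) (x : A ⟶ Y) (y : Y ⟶ Z), IsAlmostSplitTriangle C x y δ := by
  obtain ⟨Y, x, y, hT⟩ := distinguished_cocone_triangle₂ δ
  have hr : RightAlmostSplit C y := by
    intro N c hc
    have hcδ : c ≫ δ = 0 := by
      by_contra hne
      obtain ⟨g, hg⟩ := H N _ hne
      have : IsIso (g ≫ c) := LocEnd_fix C hZ δ hδ _ (by simpa using hg)
      exact hc ⟨inv (g ≫ c) ≫ g, by simp⟩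
    obtain ⟨m, hm⟩ := Triangle.coyoneda_exact₃ _ hT c hcδ
    exact ⟨m, hm.symm⟩
  refine ⟨Y, x, y, hT, hδ, ?_, hr⟩
  intro M a ha
  by_cases h0 : δ ≫ a⟦(1 : ℤ)⟧' = 0
  · exact tri_yon1 C hT a h0
  · exfalso
    obtain ⟨W, x', y', hT'⟩ := distinguished_cocone_triangle₂ (δ ≫ a⟦(1 : ℤ)⟧')
    have hns : ¬ ∃ s : Z ⟶ W, s ≫ y' = 𝟙 Z := by
      rintro ⟨s, hs⟩
      apply h0
      have : y' ≫ (δ ≫ a⟦(1 : ℤ)⟧') = 0 := comp_distTriang_mor_zero₂₃ _ hT'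
      rw [← Category.id_comp (δ ≫ _), ← hs, Category.assoc, this, comp_zero]
    obtain ⟨w, hw⟩ := hr y' hns
    obtain ⟨b, hb⟩ := tri_mor C hT hT' w hw
    have hb' : δ ≫ (a ≫ b)⟦(1 : ℤ)⟧' = δ := by simpa using hb
    have : IsIso ((a ≫ b)⟦(1 : ℤ)⟧') := LocEnd_fix' C (LocEnd_shift C 1 hA) δ hδ _ hb'
    have : IsIso (a ≫ b) := isIso_of_reflects_iso _ (shiftFunctor C (1 : ℤ))
    exact ha ⟨b ≫ inv (a ≫ b), by rw [← Category.assoc]; simp⟩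

theorem no_summand {A Y Z D : C} {x : A ⟶ Y} {y : Y ⟶ Z} {δ : Z ⟶ A⟦(1 : ℤ)⟧}
    (h : IsAlmostSplitTriangle C x y δ) (j : D ⟶ Z) (q : Z ⟶ D) (hjq : j ≫ q = 𝟙 D)
    (hj : j ≫ δ = 0) : IsZero D := by
  obtain ⟨hT, hδ, -, hr⟩ := h
  have hyδ : y ≫ δ = 0 := comp_distTriang_mor_zero₂₃ _ hT
  have he : ∃ s : Z ⟶ Z, s ≫ (𝟙 Z - q ≫ j) = 𝟙 Z := by
    by_contra hcon
    obtain ⟨m, hm⟩ := hr _ hcon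
    apply hδ
    have : (𝟙 Z - q ≫ j) ≫ δ = 0 := by rw [← hm, Category.assoc, hyδ, comp_zero]
    simpa [hj] using this
  obtain ⟨s, hs⟩ := he
  have h2 : (𝟙 Z - q ≫ j) ≫ q = 0 := by simp [hjq]
  have hq : q = 0 := by rw [← Category.id_comp q, ← hs, Category.assoc, h2, comp_zero]
  rw [IsZero.iff_id_eq_zero, ← hjq, hq, comp_zero]

theorem addSet_sum {T D : C} (hD : D ∈ addSet C T) :
    ∃ (n : ℕ) (a : Fin n → (D ⟶ T)) (b : Fin n → (T ⟶ D)), ∑ i, a i ≫ b i = 𝟙 D := by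
  obtain ⟨n, i, p, hip⟩ := hD
  refine ⟨n, fun j => i ≫ biproduct.π _ j, fun j => biproduct.ι (fun _ : Fin n => T) j ≫ p, ?_⟩
  have : ∑ j, (i ≫ biproduct.π (fun _ : Fin n => T) j) ≫ biproduct.ι (fun _ : Fin n => T) j ≫ p =
      i ≫ (∑ j, biproduct.π (fun _ : Fin n => T) j ≫ biproduct.ι (fun _ : Fin n => T) j) ≫ p := by
    simp only [Preadditive.comp_sum, Preadditive.sum_comp, Category.assoc]
  rw [this, biproduct.total]; simp [hip]

theorem pow_mem_addSet (T : C) (n : ℕ) : (⨁ (fun _ : Fin n => T)) ∈ addSet C T :=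
  ⟨n, 𝟙 _, 𝟙 _, by simp⟩

theorem hom_eq_zero_of_addSet {T D W : C} (hD : D ∈ addSet C T) (h : ∀ f : T ⟶ W, f = 0)
    (f : D ⟶ W) : f = 0 := by
  obtain ⟨n, a, b, hab⟩ := addSet_sum C hD
  rw [← Category.id_comp f, ← hab, Preadditive.sum_comp]
  exact Finset.sum_eq_zero fun i _ => by rw [Category.assoc, h (b i ≫ f), comp_zero]

/-- left `add T`-approximation triangle -/
theorem exists_approx [∀ X Y : C, FiniteDimensional k (X ⟶ Y)] (T : C)
    (hT : ClusterTilting C T) (N : C) :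
    ∃ (T₁ T₀ : C) (π : N ⟶ T₁) (d : T₁ ⟶ T₀) (e : T₀ ⟶ N⟦(1 : ℤ)⟧),
      (Triangle.mk π d e ∈ distTriang C) ∧ T₁ ∈ addSet C T ∧ T₀ ∈ addSet C T ∧
      ∀ (D : C), D ∈ addSet C T → ∀ f : N ⟶ D, ∃ h : T₁ ⟶ D, π ≫ h = f := by
  let bs := Module.finBasis k (N ⟶ T)
  let n := Module.finrank k (N ⟶ T)
  let π : N ⟶ ⨁ (fun _ : Fin n => T) := biproduct.lift fun j => bs j
  have hTf : ∀ f : N ⟶ T, ∃ h : (⨁ (fun _ : Fin n => T)) ⟶ T, π ≫ h = f := by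
    intro f
    refine ⟨∑ j, bs.repr f j • biproduct.π _ j, ?_⟩
    conv_rhs => rw [← bs.sum_repr f]
    simp [Preadditive.comp_sum, π]
  obtain ⟨T₀, d, e, hdist⟩ := distinguished_cocone_triangle π
  have hmem := pow_mem_addSet C T n
  refine ⟨_, T₀, π, d, e, hdist, hmem, ?_, ?_⟩
  · refine (hT T₀).2.2 fun f => ?_
    have h1 : d ≫ f = 0 := (hT _).2.1 hmem _
    obtain ⟨g, hg⟩ := tri_yon3 C hdist f h1
    obtain ⟨h, hh⟩ := hTf ((shiftFunctor C (1 : ℤ)).preimage g)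
    have hg' : g = π⟦(1 : ℤ)⟧' ≫ h⟦(1 : ℤ)⟧' := by
      rw [← Functor.map_comp, hh, Functor.map_preimage]
    have h31 : e ≫ π⟦(1 : ℤ)⟧' = 0 := comp_distTriang_mor_zero₃₁ _ hdist
    have hg2 : f = e ≫ g := hg
    rw [hg2, hg', reassoc_of% h31, zero_comp]
  · intro D hD f
    obtain ⟨m, a, b, hab⟩ := addSet_sum C hD
    choose h hh using fun i => hTf (f ≫ a i)
    refine ⟨∑ i, h i ≫ b i, ?_⟩
    rw [Preadditive.comp_sum]
    simp_rw [reassoc_of% hh, ← Preadditive.comp_sum]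
    rw [hab, Category.comp_id]

theorem exists_functional {X : C} (hX : LocEnd C X) :
    ∃ φ₀ : (X ⟶ X) →ₗ[k] k, φ₀ ≠ 0 ∧ ∀ e : X ⟶ X, ¬ IsIso e → φ₀ e = 0 := by
  have hadd : ∀ a b : X ⟶ X, IsIso (a + b) → IsIso a ∨ IsIso b := by
    intro a b h
    have key : ∀ a : X ⟶ X, ∀ c : X ⟶ X, IsIso c → IsIso (c ≫ a) → IsIso a := by
      intro a c _ _
      exact IsIso.of_isIso_comp_left c a
    refine (hX.2 (inv (a + b) ≫ a) (inv (a + b) ≫ b) ?_).imp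
      (key a _ inferInstance) (key b _ inferInstance)
    rw [← Preadditive.comp_add]; exact IsIso.inv_hom_id (a + b)
  have h0 : ¬ IsIso (0 : X ⟶ X) := fun h => hX.1 (by
    rw [IsZero.iff_id_eq_zero, ← IsIso.hom_inv_id (0 : X ⟶ X), zero_comp])
  let J : Submodule k (X ⟶ X) :=
    { carrier := {e | ¬ IsIso e}
      zero_mem' := h0
      add_mem' := fun {a b} ha hb h => (hadd a b h).elim ha hb
      smul_mem' := by
        intro c e he h
        by_cases hc : c = 0
        · subst hc
          rw [zero_smul] at h
          exact h0 h
        · apply he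
          refine ⟨c • inv (c • e), ?_, ?_⟩
          · rw [Linear.comp_smul, ← Linear.smul_comp]; exact IsIso.hom_inv_id (c • e)
          · rw [Linear.smul_comp, ← Linear.comp_smul]; exact IsIso.inv_hom_id (c • e) }
  have h1 : 𝟙 X ∉ J := fun h => h inferInstance
  obtain ⟨φ, hφ, hJ⟩ := Submodule.exists_le_ker_of_notMem h1
  exact ⟨φ, fun h => hφ (by rw [h]; rfl), fun e he => hJ he⟩

theorem exists_V [∀ X Y : C, FiniteDimensional k (X ⟶ Y)] (T : C)
    (hT : ClusterTilting C T) {X : C} (hX : X ∈ addSet C T) (hloc : LocEnd C X) :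
    ∃ (V : C) (δ : V ⟶ X), δ ≠ 0 ∧
      ∀ (N : C) (f : N ⟶ X), f ≠ 0 → ∃ g : V ⟶ N, g ≫ f = δ := by
  obtain ⟨φ₀, hφ₀, hφ₀'⟩ := exists_functional k C hloc
  let n := Module.finrank k (Module.Dual k (T ⟶ X))
  let φb := Module.finBasis k (Module.Dual k (T ⟶ X))
  let Ta : C := ⨁ (fun _ : Fin n => T)
  let φ : (Ta ⟶ X) →ₗ[k] k :=
    ∑ l, (φb l) ∘ₗ Linear.leftComp k X (biproduct.ι (fun _ : Fin n => T) l)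
  have hφ : ∀ w : Ta ⟶ X, φ w = ∑ l, φb l (biproduct.ι (fun _ : Fin n => T) l ≫ w) := by
    intro w; simp [φ]
  -- surjectivity at T
  have hsT : ∀ ψ : (T ⟶ X) →ₗ[k] k, ∃ g : Ta ⟶ T, ∀ t, φ (g ≫ t) = ψ t := by
    intro ψ
    refine ⟨∑ l, φb.repr ψ l • biproduct.π _ l, fun t => ?_⟩
    have hψ : ψ t = ∑ l, φb.repr ψ l * φb l t := by
      have h1 := congrArg (fun ψ' : (T ⟶ X) →ₗ[k] k => ψ' t) (φb.sum_repr ψ)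
      refine h1.symm.trans ?_
      rw [LinearMap.sum_apply]
      rfl
    rw [hψ, hφ]
    refine Finset.sum_congr rfl fun l _ => ?_
    have : biproduct.ι (fun _ : Fin n => T) l ≫
        (∑ l, φb.repr ψ l • biproduct.π (fun _ : Fin n => T) l) = φb.repr ψ l • 𝟙 T := by
      rw [Preadditive.comp_sum, Finset.sum_eq_single l]
      · rw [Linear.comp_smul, biproduct.ι_π_self]
      · intro b _ hb
        rw [Linear.comp_smul, biproduct.ι_π_ne _ hb.symm, smul_zero]
      · simp
    rw [reassoc_of% this, Linear.smul_comp, Category.id_comp, map_smul, smul_eq_mul]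
  have hs : ∀ D : C, D ∈ addSet C T → ∀ ψ : (D ⟶ X) →ₗ[k] k,
      ∃ g : Ta ⟶ D, ∀ t, φ (g ≫ t) = ψ t := by
    intro D hD ψ
    obtain ⟨m, a, b, hab⟩ := addSet_sum C hD
    choose g hg using fun j => hsT (ψ ∘ₗ Linear.leftComp k X (a j))
    refine ⟨∑ j, g j ≫ b j, fun t => ?_⟩
    rw [Preadditive.sum_comp, map_sum]
    simp_rw [Category.assoc, hg]
    simp only [LinearMap.comp_apply, Linear.leftComp_apply]
    rw [← map_sum]
    congr 1
    simp_rw [← Category.assoc]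
    rw [← Preadditive.sum_comp, hab, Category.id_comp]
  -- the kernel
  let K : Submodule k (Ta ⟶ T) :=
    { carrier := {u | ∀ s : T ⟶ X, φ (u ≫ s) = 0}
      zero_mem' := by intro s; simp
      add_mem' := by
        intro a b ha hb s
        rw [Preadditive.add_comp, map_add, ha s, hb s, add_zero]
      smul_mem' := by
        intro c a ha s
        rw [Linear.smul_comp, map_smul, ha s, smul_zero] }
  let m := Module.finrank k K
  let ub := Module.finBasis k K
  let u : Ta ⟶ ⨁ (fun _ : Fin m => T) := biproduct.lift fun j => (ub j : Ta ⟶ T)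
  have huK : ∀ s : (⨁ (fun _ : Fin m => T)) ⟶ X, φ (u ≫ s) = 0 := by
    intro s
    have : u ≫ s = ∑ j, (ub j : Ta ⟶ T) ≫ biproduct.ι (fun _ : Fin m => T) j ≫ s := by
      have h1 : u ≫ s = u ≫ (∑ j, biproduct.π (fun _ : Fin m => T) j ≫
          biproduct.ι (fun _ : Fin m => T) j) ≫ s := by rw [biproduct.total]; simp
      rw [h1, Preadditive.sum_comp, Preadditive.comp_sum]
      refine Finset.sum_congr rfl fun j _ => ?_
      simp [u]
    rw [this, map_sum]
    exact Finset.sum_eq_zero fun j _ => (ub j).2 _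
  obtain ⟨V, v, w, hdist⟩ := distinguished_cocone_triangle₁ u
  have hvu : v ≫ u = 0 := comp_distTriang_mor_zero₁₂ _ hdist
  have hvT : ∀ z : Ta ⟶ T, (∀ s : T ⟶ X, φ (z ≫ s) = 0) → v ≫ z = 0 := by
    intro z hz
    have h1 : z = ∑ j, ub.repr ⟨z, hz⟩ j • (ub j : Ta ⟶ T) := by
      have := congrArg Subtype.val (ub.sum_repr ⟨z, hz⟩)
      refine this.symm.trans ?_
      rw [Submodule.coe_sum]
      rfl
    have h2 : ∀ j, v ≫ (ub j : Ta ⟶ T) = 0 := by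
      intro j
      have : (ub j : Ta ⟶ T) = u ≫ biproduct.π _ j := by simp [u]
      rw [this, reassoc_of% hvu, zero_comp]
    rw [h1, Preadditive.comp_sum]
    exact Finset.sum_eq_zero fun j _ => by rw [Linear.comp_smul, h2, smul_zero]
  have hv : ∀ D : C, D ∈ addSet C T → ∀ z : Ta ⟶ D,
      (∀ s : D ⟶ X, φ (z ≫ s) = 0) → v ≫ z = 0 := by
    intro D hD z hz
    obtain ⟨m, a, b, hab⟩ := addSet_sum C hD
    rw [← Category.comp_id z, ← hab, Preadditive.comp_sum, Preadditive.comp_sum]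
    refine Finset.sum_eq_zero fun j _ => ?_
    have := hvT (z ≫ a j) (fun s => by rw [Category.assoc]; exact hz _)
    rw [reassoc_of% this, zero_comp]
  obtain ⟨δ', hδ'⟩ := hs X hX φ₀
  refine ⟨V, v ≫ δ', ?_, ?_⟩
  · intro h0
    obtain ⟨t, ht⟩ := tri_yon2 C hdist δ' h0
    have ht' : δ' = u ≫ t := ht
    apply hφ₀
    ext e
    rw [← hδ' e, ht']
    have h3 := huK (t ≫ e)
    rw [← Category.assoc] at h3
    exact h3
  · intro N f hf
    obtain ⟨T₁, T₀, π, d, e, hd, hT₁, hT₀, happ⟩ := exists_approx k C T hT N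
    obtain ⟨h, hh⟩ := happ X hX f
    have hπd : π ≫ d = 0 := comp_distTriang_mor_zero₁₂ _ hd
    -- the functional
    let R : Submodule k (T₁ ⟶ X) := LinearMap.range (Linear.leftComp k X d)
    let L : (X ⟶ X) →ₗ[k] ((T₁ ⟶ X) ⧸ R) := R.mkQ ∘ₗ Linear.leftComp k X h
    have hL : φ₀ ∈ (LinearMap.ker L).dualAnnihilator := by
      rw [Submodule.mem_dualAnnihilator]
      intro e he
      apply hφ₀'
      intro hiso
      have : h ≫ e ∈ R := by simpa [L] using he
      obtain ⟨t, ht⟩ := this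
      have ht' : d ≫ t = h ≫ e := ht
      apply hf
      rw [← hh, ← cancel_mono e, Category.assoc, ← ht', reassoc_of% hπd]
      simp
    rw [← LinearMap.range_dualMap_eq_dualAnnihilator_ker] at hL
    obtain ⟨ψ', hψ'⟩ := hL
    obtain ⟨g', hg'⟩ := hs T₁ hT₁ (ψ' ∘ₗ R.mkQ)
    have h1 : v ≫ (g' ≫ d) = 0 := hv T₀ hT₀ _ fun s => by
      rw [Category.assoc, hg']
      have : R.mkQ (d ≫ s) = 0 := by
        rw [Submodule.mkQ_apply, Submodule.Quotient.mk_eq_zero]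
        exact ⟨s, rfl⟩
      rw [LinearMap.comp_apply, this, map_zero]
    have h2 : v ≫ (g' ≫ h - δ') = 0 := hv X hX _ fun s => by
      rw [Preadditive.sub_comp, map_sub, Category.assoc, hg', hδ', ← hψ', sub_eq_zero]
      rfl
    obtain ⟨g, hg⟩ := tri_coyon2 C hd (v ≫ g') (by simpa using h1)
    have hg2 : v ≫ g' = g ≫ π := hg
    refine ⟨g, ?_⟩
    rw [Preadditive.comp_sub, sub_eq_zero] at h2
    rw [← hh, ← reassoc_of% hg2, h2]

theorem exists_V_loc [∀ X Y : C, FiniteDimensional k (X ⟶ Y)] (hKS : KrullSchmidt C) (T : C)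
    (hT : ClusterTilting C T) {X : C} (hX : X ∈ addSet C T) (hloc : LocEnd C X) :
    ∃ (V : C) (δ : V ⟶ X), LocEnd C V ∧ δ ≠ 0 ∧
      ∀ (N : C) (f : N ⟶ X), f ≠ 0 → ∃ g : V ⟶ N, g ≫ f = δ := by
  obtain ⟨V, δ, hδ, H⟩ := exists_V k C T hT hX hloc
  obtain ⟨n, f, e, hf⟩ := hKS V
  have : ∃ i, (biproduct.ι f i ≫ e.inv) ≫ δ ≠ 0 := by
    by_contra hcon
    push Not at hcon
    apply hδ
    rw [← cancel_epi e.inv]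
    apply biproduct.hom_ext'
    intro j
    simpa using hcon j
  obtain ⟨i, hi⟩ := this
  refine ⟨f i, _, LocEnd_of_isLocalRing C (hf i), hi, fun N c hc => ?_⟩
  obtain ⟨g, hg⟩ := H N c hc
  exact ⟨(biproduct.ι f i ≫ e.inv) ≫ g, by rw [Category.assoc, hg]⟩

end Helpers

/-- **Corollary 6.3.** Let `C` be a Krull–Schmidt, Hom-finite, `k`-linear triangulated
category with a cluster tilting object `T`, and let `X ∈ add T` be indecomposable.
Then `X` admits almost split triangles `X → Y' → Z' → X[1]` and
`X[-1] → Z'' → Y'' → X` in which `Z'` and `Z''` have no nonzero direct summand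
belonging to `add T`. -/
theorem heart_stmt_15 [∀ X Y : C, FiniteDimensional k (X ⟶ Y)]
    (hKS : KrullSchmidt C) (T : C) (hT : ClusterTilting C T)
    {X : C} (hX : X ∈ addSet C T) (hind : Indecomposable C X) :
    (∃ (Y' Z' : C) (x : X ⟶ Y') (y : Y' ⟶ Z') (δ : Z' ⟶ X⟦(1 : ℤ)⟧),
      IsAlmostSplitTriangle C x y δ ∧
      ∀ D : C, D ∈ addSet C T → (∃ (i : D ⟶ Z') (p : Z' ⟶ D), i ≫ p = 𝟙 D) →
        IsZero D) ∧
    (∃ (Z'' Y'' : C) (x : X⟦(-1 : ℤ)⟧ ⟶ Z'') (y : Z'' ⟶ Y'')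
        (δ : Y'' ⟶ (X⟦(-1 : ℤ)⟧)⟦(1 : ℤ)⟧),
      IsAlmostSplitTriangle C x y δ ∧
      ∀ D : C, D ∈ addSet C T → (∃ (i : D ⟶ Z'') (p : Z'' ⟶ D), i ≫ p = 𝟙 D) →
        IsZero D) := by
  have hloc := LocEnd_of_indec C hKS hind
  obtain ⟨V, δ, hV, hδ, H⟩ := exists_V_loc k C hKS T hT hX hloc
  constructor
  · obtain ⟨Y, x, y, hAR⟩ := exists_ARtriangle C hloc (LocEnd_shift C 1 hV) (δ⟦(1 : ℤ)⟧')
      (fun h => hδ ((shiftFunctor C (1 : ℤ)).map_injective (by rw [h, Functor.map_zero])))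
      (by
        intro N f hf
        obtain ⟨N', ⟨e⟩⟩ : ∃ N' : C, Nonempty (N'⟦(1 : ℤ)⟧ ≅ N) :=
          ⟨_, ⟨(shiftFunctor C (1 : ℤ)).objObjPreimageIso N⟩⟩
        obtain ⟨g, hg⟩ := H N' ((shiftFunctor C (1 : ℤ)).preimage (e.hom ≫ f)) (by
          intro h
          apply hf
          rw [← cancel_epi e.hom, ← (shiftFunctor C (1 : ℤ)).map_preimage (e.hom ≫ f), h,
            Functor.map_zero, comp_zero])
        refine ⟨g⟦(1 : ℤ)⟧' ≫ e.hom, ?_⟩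
        rw [← hg, Functor.map_comp, Functor.map_preimage, Category.assoc])
    refine ⟨Y, _, x, y, _, hAR, ?_⟩
    rintro D hD ⟨i, p, hip⟩
    exact no_summand C hAR i p hip (hom_eq_zero_of_addSet C hD ((hT X).1.1 hX) _)
  · let e : (X⟦(-1 : ℤ)⟧)⟦(1 : ℤ)⟧ ≅ X := shiftNegShift X (1 : ℤ)
    obtain ⟨Y, x, y, hAR⟩ := exists_ARtriangle C (LocEnd_shift C (-1) hloc) hV (δ ≫ e.inv)
      (fun h => hδ (by rw [← cancel_mono e.inv, h, zero_comp]))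
      (by
        intro N f hf
        obtain ⟨g, hg⟩ := H N (f ≫ e.hom) (fun h => hf (by
          rw [← cancel_mono e.hom, h, zero_comp]))
        exact ⟨g, by rw [← hg]; simp⟩)
    refine ⟨Y, V, x, y, _, hAR, ?_⟩
    rintro D hD ⟨i, p, hip⟩
    have hxp : x ≫ p = 0 := by
      apply (shiftFunctor C (1 : ℤ)).map_injective
      rw [Functor.map_zero, ← cancel_epi e.inv, comp_zero]
      exact hom_eq_zero_of_addSet C hX ((hT D).1.1 hD) _
    obtain ⟨q, hq⟩ := tri_yon2 C hAR.1 p hxp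
    have hq' : p = y ≫ q := hq
    have hyδ : y ≫ (δ ≫ e.inv) = 0 := comp_distTriang_mor_zero₂₃ _ hAR.1
    exact no_summand C hAR (i ≫ y) q (by rw [Category.assoc, ← hq', hip])
      (by rw [Category.assoc, hyδ, comp_zero])
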